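/- Let S ⊆ ℤ² be periodic with N_S(x) ≤ 3 for every x ∈ S, and suppose S has density exactly 1/2. Then N_S(x) ≥ 2 for every x ∈ S and N_S(y) ≥ 4 for every y ∉ S; in particular S is a still Life. -/

import Mathlib

open Filter Topology

/-- `y` is a neighbor of `x` in the 8-point (Moore) neighborhood of `ℤ²`. -/
def IsNbr (x y : ℤ × ℤ) : Prop :=
  y ≠ x ∧ |y.1 - x.1| ≤ 1 ∧ |y.2 - x.2| ≤ 1

/-- `N_S(x)`: the number of neighbors of `x` lying in `S`. -/
noncomputable def nbrCount (S : Set (ℤ × ℤ)) (x : ℤ × ℤ) : ℕ :=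
  Set.ncard {y ∈ S | IsNbr x y}

/-- The box `B_r = {x : |x₁| < r, |x₂| < r}`. -/
def box (r : ℕ) : Set (ℤ × ℤ) :=
  {x | |x.1| < (r : ℤ) ∧ |x.2| < (r : ℤ)}

/-- `S` has density `d`: the sequence `|S ∩ B_r| / (2r-1)²` tends to `d`. -/
def HasDensity (S : Set (ℤ × ℤ)) (d : ℝ) : Prop :=
  Tendsto (fun r : ℕ => (Set.ncard (S ∩ box r) : ℝ) / (2 * (r : ℝ) - 1) ^ 2) atTop (𝓝 d)

/-- `S ⊆ ℤ²` is periodic: invariant under two independent positive translations. -/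
def Periodic (S : Set (ℤ × ℤ)) : Prop :=
  ∃ p q : ℤ, 0 < p ∧ 0 < q ∧
    (∀ x : ℤ × ℤ, x ∈ S ↔ (x.1 + p, x.2) ∈ S) ∧
    (∀ x : ℤ × ℤ, x ∈ S ↔ (x.1, x.2 + q) ∈ S)

/-- A still Life: a fixed point of the Game of Life transition rule. -/
def StillLife (S : Set (ℤ × ℤ)) : Prop :=
  (∀ x ∉ S, nbrCount S x ≠ 3) ∧
  (∀ x ∈ S, 2 ≤ nbrCount S x) ∧
  (∀ x ∈ S, nbrCount S x ≤ 3)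

/-- A seven-bit pattern as a number, least significant bit first. -/
def patternCode (b₁ b₂ b₃ b₄ b₅ b₆ b₇ : ℕ) : ℕ :=
  b₁ + 2 * (b₂ + 2 * (b₃ + 2 * (b₄ + 2 * (b₅ + 2 * (b₆ + 2 * b₇)))))

/-- The amount a dead cell gives to a live neighbor sharing a side with it, as a function of the
states of the other seven neighbors of the dead cell, read counterclockwise starting after the
recipient. The values are the hexadecimal digits of a single number. -/
def orthGift (b₁ b₂ b₃ b₄ b₅ b₆ b₇ : ℕ) : ℕ :=
  Nat.shiftRight
    0x00110011001100210121012100110021120122021102110312012201220322150823132500130023032312230013012313121313132313351523131313351357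
    (4 * patternCode b₁ b₂ b₃ b₄ b₅ b₆ b₇) % 16

/-- The amount a dead cell gives to a live neighbor sharing only a corner with it, with the same
conventions as for `orthGift`. -/
def diagGift (b₁ b₂ b₃ b₄ b₅ b₆ b₇ : ℕ) : ℕ :=
  Nat.shiftRight
    0x03060202020302030203022202030223022302220203022202232222022322523222222422222222222222222222232362343232323232322422222332223327
    (4 * patternCode b₁ b₂ b₃ b₄ b₅ b₆ b₇) % 16

/-- A lower bound for `orthGift` depending only on the cells adjacent to the recipient. -/
def orthMin (b₁ b₂ b₆ b₇ : ℕ) : ℕ :=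
  Nat.shiftRight 0x0011110100131312 (4 * (b₁ + 2 * (b₂ + 2 * (b₆ + 2 * b₇)))) % 16

/-- A lower bound for `diagGift` depending only on the cells adjacent to the recipient. -/
def diagMin (b₁ b₇ : ℕ) : ℕ :=
  Nat.shiftRight 0x0222 (4 * (b₁ + 2 * b₇)) % 16

/-- Test a Boolean function at both possible cell states. -/
def both (f : ℕ → Bool) : Bool := f 0 && f 1

theorem both_apply {f : ℕ → Bool} (h : both f = true) {b : ℕ} (hb : b ≤ 1) : f b = true := by
  obtain ⟨h₀, h₁⟩ := (Bool.and_eq_true _ _).mp h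
  interval_cases b <;> assumption

theorem orthMin_le_orthGift {b₁ b₂ b₃ b₄ b₅ b₆ b₇ : ℕ} (h₁ : b₁ ≤ 1) (h₂ : b₂ ≤ 1) (h₃ : b₃ ≤ 1)
    (h₄ : b₄ ≤ 1) (h₅ : b₅ ≤ 1) (h₆ : b₆ ≤ 1) (h₇ : b₇ ≤ 1) :
    orthMin b₁ b₂ b₆ b₇ ≤ orthGift b₁ b₂ b₃ b₄ b₅ b₆ b₇ := by
  have h : (both fun b₁ => both fun b₂ => both fun b₃ => both fun b₄ => both fun b₅ =>
      both fun b₆ => both fun b₇ =>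
        Nat.ble (orthMin b₁ b₂ b₆ b₇) (orthGift b₁ b₂ b₃ b₄ b₅ b₆ b₇)) = true := by
    decide +kernel
  exact Nat.le_of_ble_eq_true (both_apply (both_apply (both_apply (both_apply (both_apply
    (both_apply (both_apply h h₁) h₂) h₃) h₄) h₅) h₆) h₇)

theorem diagMin_le_diagGift {b₁ b₂ b₃ b₄ b₅ b₆ b₇ : ℕ} (h₁ : b₁ ≤ 1) (h₂ : b₂ ≤ 1) (h₃ : b₃ ≤ 1)
    (h₄ : b₄ ≤ 1) (h₅ : b₅ ≤ 1) (h₆ : b₆ ≤ 1) (h₇ : b₇ ≤ 1) :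
    diagMin b₁ b₇ ≤ diagGift b₁ b₂ b₃ b₄ b₅ b₆ b₇ := by
  have h : (both fun b₁ => both fun b₂ => both fun b₃ => both fun b₄ => both fun b₅ =>
      both fun b₆ => both fun b₇ =>
        Nat.ble (diagMin b₁ b₇) (diagGift b₁ b₂ b₃ b₄ b₅ b₆ b₇)) = true := by
    decide +kernel
  exact Nat.le_of_ble_eq_true (both_apply (both_apply (both_apply (both_apply (both_apply
    (both_apply (both_apply h h₁) h₂) h₃) h₄) h₅) h₆) h₇)

/-- The total given by a dead cell with neighbors `n₀, …, n₇` in counterclockwise order,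
starting in the east. -/
def ringGift (n₀ n₁ n₂ n₃ n₄ n₅ n₆ n₇ : ℕ) : ℕ :=
  n₀ * orthGift n₁ n₂ n₃ n₄ n₅ n₆ n₇ + n₁ * diagGift n₂ n₃ n₄ n₅ n₆ n₇ n₀ +
  n₂ * orthGift n₃ n₄ n₅ n₆ n₇ n₀ n₁ + n₃ * diagGift n₄ n₅ n₆ n₇ n₀ n₁ n₂ +
  n₄ * orthGift n₅ n₆ n₇ n₀ n₁ n₂ n₃ + n₅ * diagGift n₆ n₇ n₀ n₁ n₂ n₃ n₄ +
  n₆ * orthGift n₇ n₀ n₁ n₂ n₃ n₄ n₅ + n₇ * diagGift n₀ n₁ n₂ n₃ n₄ n₅ n₆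

/-- A dead cell gives at most eight. If it gives exactly eight although it has at most three live
neighbors, its ring of neighbors is one of four rotations of a single pattern. -/
theorem ringGift_le {n₀ n₁ n₂ n₃ n₄ n₅ n₆ n₇ : ℕ} (h₀ : n₀ ≤ 1) (h₁ : n₁ ≤ 1) (h₂ : n₂ ≤ 1)
    (h₃ : n₃ ≤ 1) (h₄ : n₄ ≤ 1) (h₅ : n₅ ≤ 1) (h₆ : n₆ ≤ 1) (h₇ : n₇ ≤ 1) :
    ringGift n₀ n₁ n₂ n₃ n₄ n₅ n₆ n₇ ≤ 8 ∧
      (4 ≤ n₀ + n₁ + n₂ + n₃ + n₄ + n₅ + n₆ + n₇ ∨ ringGift n₀ n₁ n₂ n₃ n₄ n₅ n₆ n₇ ≤ 7 ∨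
        n₀ + 2 * patternCode n₁ n₂ n₃ n₄ n₅ n₆ n₇ = 37 ∨
        n₀ + 2 * patternCode n₁ n₂ n₃ n₄ n₅ n₆ n₇ = 73 ∨
        n₀ + 2 * patternCode n₁ n₂ n₃ n₄ n₅ n₆ n₇ = 82 ∨
        n₀ + 2 * patternCode n₁ n₂ n₃ n₄ n₅ n₆ n₇ = 148) := by
  have h : (both fun n₀ => both fun n₁ => both fun n₂ => both fun n₃ => both fun n₄ =>
      both fun n₅ => both fun n₆ => both fun n₇ =>
        decide (ringGift n₀ n₁ n₂ n₃ n₄ n₅ n₆ n₇ ≤ 8 ∧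
      (4 ≤ n₀ + n₁ + n₂ + n₃ + n₄ + n₅ + n₆ + n₇ ∨ ringGift n₀ n₁ n₂ n₃ n₄ n₅ n₆ n₇ ≤ 7 ∨
        n₀ + 2 * patternCode n₁ n₂ n₃ n₄ n₅ n₆ n₇ = 37 ∨
        n₀ + 2 * patternCode n₁ n₂ n₃ n₄ n₅ n₆ n₇ = 73 ∨
        n₀ + 2 * patternCode n₁ n₂ n₃ n₄ n₅ n₆ n₇ = 82 ∨
        n₀ + 2 * patternCode n₁ n₂ n₃ n₄ n₅ n₆ n₇ = 148))) = true := by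
    decide +kernel
  exact of_decide_eq_true (both_apply (both_apply (both_apply (both_apply (both_apply (both_apply
    (both_apply (both_apply h h₀) h₁) h₂) h₃) h₄) h₅) h₆) h₇)

/-- One step of the search for cheap neighborhoods of a live cell: all neighbors of some cell
adjacent to it, in state `s`, have become known; `n` counts the live ones and `g` is the gift
to the central cell. The branch is closed if that cell has too many live neighbors, or if the gifts
`acc` collected so far, together with the lower bound `rest` for the missing ones, reach `thr`. -/
def stage (s n g acc rest thr : ℕ) (k : ℕ → Bool) : Bool :=
  Nat.ble 4 (s * n) || (Nat.ble thr (acc + (1 - s) * g + rest) || k (acc + (1 - s) * g))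

theorem stage_spec {s n g acc rest thr : ℕ} {k : ℕ → Bool} (h : stage s n g acc rest thr k = true)
    (hs : s * n ≤ 3) : thr ≤ acc + (1 - s) * g + rest ∨ k (acc + (1 - s) * g) = true := by
  rcases (Bool.or_eq_true _ _).mp h with h | h
  · have := Nat.le_of_ble_eq_true h
    omega
  · exact ((Bool.or_eq_true _ _).mp h).imp_left Nat.le_of_ble_eq_true

/-- The central cell has to make up for a dead side neighbor with few live neighbors: `z` counts
live cells where there should be none, `g` and `h` are the other two live neighbors of the dead
cell, and the obligation lapses if `u = 1` and `w = 0`. -/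
def obliged (z g h u w : ℕ) : Bool := Nat.beq z 0 && Nat.beq (g * h * (1 - u * (1 - w))) 1

theorem eq_one_and_eq_zero_of_obliged_eq_false {u w : ℕ} (hu : u ≤ 1) (hw : w ≤ 1)
    (h : obliged 0 1 1 u w = false) : u = 1 ∧ w = 0 := by
  interval_cases u <;> interval_cases w <;> simp_all [obliged]

/-- A condition necessary for `obliged` which involves only the cells adjacent to the central
one. -/
def obligable (z m : ℕ) : Bool := Nat.beq z 0 && Nat.beq m 1

theorem obligable_of_obliged {z z' g g' h u w : ℕ} (ho : obliged (z + g' + z') g h u w = true) :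
    obligable z (g + g') = true := by
  simp only [obliged, obligable, Bool.and_eq_true, Nat.beq_eq] at ho ⊢
  obtain ⟨hz, hm⟩ := ho
  have := Nat.eq_one_of_mul_eq_one_right (Nat.eq_one_of_mul_eq_one_right hm)
  omega

/-- The total required by a live cell: nine if it has at most one live neighbor, or is obliged
to make up for one of its side neighbors, and eight otherwise. -/
def required (i₀ i₁ i₂ i₃ i₄ i₅ i₆ i₇ c₀ c₁ c₃ c₄ c₅ c₇ c₈ c₉ c₁₁ c₁₂ c₁₃ c₁₅ : ℕ) : ℕ :=
  cond (Nat.ble (i₀ + i₁ + i₂ + i₃ + i₄ + i₅ + i₆ + i₇) 1 ||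
    (obliged (i₀ + i₂ + i₆ + i₁ + (c₁₅ + c₀)) i₇ c₁ i₅ c₁₂ ||
    (obliged (i₀ + i₂ + i₆ + i₇ + (c₁ + c₀)) i₁ c₁₅ i₃ c₄ ||
    (obliged (i₂ + i₄ + i₀ + i₃ + (c₃ + c₄)) i₁ c₅ i₇ c₀ ||
    (obliged (i₂ + i₄ + i₀ + i₁ + (c₅ + c₄)) i₃ c₃ i₅ c₈ ||
    (obliged (i₄ + i₆ + i₂ + i₅ + (c₇ + c₈)) i₃ c₉ i₁ c₄ ||
    (obliged (i₄ + i₆ + i₂ + i₃ + (c₉ + c₈)) i₅ c₇ i₇ c₁₂ ||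
    (obliged (i₆ + i₀ + i₄ + i₇ + (c₁₁ + c₁₂)) i₅ c₁₃ i₃ c₈ ||
    obliged (i₆ + i₀ + i₄ + i₅ + (c₁₃ + c₁₂)) i₇ c₁₁ i₁ c₀)))))))) 9 8

/-- An upper bound for `required` which depends only on the cells adjacent to the central one. -/
def requiredBound (i₀ i₁ i₂ i₃ i₄ i₅ i₆ i₇ : ℕ) : ℕ :=
  cond (Nat.ble (i₀ + i₁ + i₂ + i₃ + i₄ + i₅ + i₆ + i₇) 1 ||
    (obligable (i₀ + i₂ + i₆) (i₁ + i₇) || (obligable (i₂ + i₄ + i₀) (i₃ + i₁) ||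
    (obligable (i₄ + i₆ + i₂) (i₅ + i₃) || obligable (i₆ + i₀ + i₄) (i₇ + i₅))))) 9 8

theorem cond_nine_eight_le {a b : Bool} (h : a = true → b = true) : cond a 9 8 ≤ cond b 9 8 := by
  cases a <;> cases b <;> simp_all

theorem required_le_requiredBound (i₀ i₁ i₂ i₃ i₄ i₅ i₆ i₇ : ℕ)
    (c₀ c₁ c₃ c₄ c₅ c₇ c₈ c₉ c₁₁ c₁₂ c₁₃ c₁₅ : ℕ) :
    required i₀ i₁ i₂ i₃ i₄ i₅ i₆ i₇ c₀ c₁ c₃ c₄ c₅ c₇ c₈ c₉ c₁₁ c₁₂ c₁₃ c₁₅ ≤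
      requiredBound i₀ i₁ i₂ i₃ i₄ i₅ i₆ i₇ := by
  refine cond_nine_eight_le fun h => ?_
  simp only [Bool.or_eq_true] at h ⊢
  rcases h with h | h | h | h | h | h | h | h | h
  · exact .inl h
  · exact .inr (.inl (by rw [add_comm i₁]; exact obligable_of_obliged h))
  · exact .inr (.inl (obligable_of_obliged h))
  · exact .inr (.inr (.inl (by rw [add_comm i₃]; exact obligable_of_obliged h)))
  · exact .inr (.inr (.inl (obligable_of_obliged h)))
  · exact .inr (.inr (.inr (.inl (by rw [add_comm i₅]; exact obligable_of_obliged h))))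
  · exact .inr (.inr (.inr (.inl (obligable_of_obliged h))))
  · exact .inr (.inr (.inr (.inr (by rw [add_comm i₇]; exact obligable_of_obliged h))))
  · exact .inr (.inr (.inr (.inr (obligable_of_obliged h))))

/-- The search through all neighborhoods of a live cell. The cells adjacent to it are
`i₀, …, i₇` and the cells at distance two are `c₀, …, c₁₅`, both in counterclockwise order,
starting in the east. -/
def search (i₀ i₁ i₂ i₃ i₄ i₅ i₆ i₇ thr m₁ m₂ m₃ m₄ m₅ m₆ m₇ : ℕ) : Bool :=
  Nat.ble 4 (i₀ + i₁ + i₂ + i₃ + i₄ + i₅ + i₆ + i₇) ||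
  both fun c₁₅ => both fun c₀ => both fun c₁ =>
  stage i₀ (1 + i₆ + i₇ + c₁₅ + c₀ + c₁ + i₁ + i₂) (orthGift i₆ i₇ c₁₅ c₀ c₁ i₁ i₂)
    0 (m₁ + m₂ + m₃ + m₄ + m₅ + m₆ + m₇) thr fun acc =>
  both fun c₂ => both fun c₃ => both fun c₄ =>
  stage i₁ (1 + i₀ + c₀ + c₁ + c₂ + c₃ + c₄ + i₂) (diagGift i₀ c₀ c₁ c₂ c₃ c₄ i₂)
    acc (m₂ + m₃ + m₄ + m₅ + m₆ + m₇) thr fun acc =>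
  both fun c₅ =>
  stage i₂ (1 + i₀ + i₁ + c₃ + c₄ + c₅ + i₃ + i₄) (orthGift i₀ i₁ c₃ c₄ c₅ i₃ i₄)
    acc (m₃ + m₄ + m₅ + m₆ + m₇) thr fun acc =>
  both fun c₆ => both fun c₇ => both fun c₈ =>
  stage i₃ (1 + i₂ + c₄ + c₅ + c₆ + c₇ + c₈ + i₄) (diagGift i₂ c₄ c₅ c₆ c₇ c₈ i₄)
    acc (m₄ + m₅ + m₆ + m₇) thr fun acc =>
  both fun c₉ =>
  stage i₄ (1 + i₂ + i₃ + c₇ + c₈ + c₉ + i₅ + i₆) (orthGift i₂ i₃ c₇ c₈ c₉ i₅ i₆)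
    acc (m₅ + m₆ + m₇) thr fun acc =>
  both fun c₁₀ => both fun c₁₁ => both fun c₁₂ =>
  stage i₅ (1 + i₄ + c₈ + c₉ + c₁₀ + c₁₁ + c₁₂ + i₆) (diagGift i₄ c₈ c₉ c₁₀ c₁₁ c₁₂ i₆)
    acc (m₆ + m₇) thr fun acc =>
  both fun c₁₃ =>
  stage i₆ (1 + i₄ + i₅ + c₁₁ + c₁₂ + c₁₃ + i₇ + i₀) (orthGift i₄ i₅ c₁₁ c₁₂ c₁₃ i₇ i₀)
    acc m₇ thr fun acc =>
  both fun c₁₄ =>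
  stage i₇ (1 + i₆ + c₁₂ + c₁₃ + c₁₄ + c₁₅ + c₀ + i₀) (diagGift i₆ c₁₂ c₁₃ c₁₄ c₁₅ c₀ i₀)
    acc 0 thr fun acc =>
  Nat.ble (required i₀ i₁ i₂ i₃ i₄ i₅ i₆ i₇ c₀ c₁ c₃ c₄ c₅ c₇ c₈ c₉ c₁₁ c₁₂ c₁₃ c₁₅) acc

theorem search_eq_true {i₀ i₁ i₂ i₃ i₄ i₅ i₆ i₇ : ℕ} (hi₀ : i₀ ≤ 1) (hi₁ : i₁ ≤ 1) (hi₂ : i₂ ≤ 1)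
    (hi₃ : i₃ ≤ 1) (hi₄ : i₄ ≤ 1) (hi₅ : i₅ ≤ 1) (hi₆ : i₆ ≤ 1) (hi₇ : i₇ ≤ 1) :
    search i₀ i₁ i₂ i₃ i₄ i₅ i₆ i₇ (requiredBound i₀ i₁ i₂ i₃ i₄ i₅ i₆ i₇)
      ((1 - i₁) * diagMin i₀ i₂) ((1 - i₂) * orthMin i₀ i₁ i₃ i₄) ((1 - i₃) * diagMin i₂ i₄)
      ((1 - i₄) * orthMin i₂ i₃ i₅ i₆) ((1 - i₅) * diagMin i₄ i₆)
      ((1 - i₆) * orthMin i₄ i₅ i₇ i₀) ((1 - i₇) * diagMin i₆ i₀) = true := by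
  have h : (both fun i₀ => both fun i₁ => both fun i₂ => both fun i₃ => both fun i₄ =>
      both fun i₅ => both fun i₆ => both fun i₇ =>
        search i₀ i₁ i₂ i₃ i₄ i₅ i₆ i₇ (requiredBound i₀ i₁ i₂ i₃ i₄ i₅ i₆ i₇)
          ((1 - i₁) * diagMin i₀ i₂) ((1 - i₂) * orthMin i₀ i₁ i₃ i₄) ((1 - i₃) * diagMin i₂ i₄)
          ((1 - i₄) * orthMin i₂ i₃ i₅ i₆) ((1 - i₅) * diagMin i₄ i₆)
          ((1 - i₆) * orthMin i₄ i₅ i₇ i₀) ((1 - i₇) * diagMin i₆ i₀)) = true := by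
    decide +kernel
  exact both_apply (both_apply (both_apply (both_apply (both_apply (both_apply
    (both_apply (both_apply h hi₀) hi₁) hi₂) hi₃) hi₄) hi₅) hi₆) hi₇

/-- A live cell receives at least the required total, provided that neither it nor one of its live
neighbors has more than three live neighbors. -/
theorem required_le_received {i₀ i₁ i₂ i₃ i₄ i₅ i₆ i₇ : ℕ}
    {c₀ c₁ c₂ c₃ c₄ c₅ c₆ c₇ c₈ c₉ c₁₀ c₁₁ c₁₂ c₁₃ c₁₄ c₁₅ : ℕ}
    (hi₀ : i₀ ≤ 1) (hi₁ : i₁ ≤ 1) (hi₂ : i₂ ≤ 1) (hi₃ : i₃ ≤ 1)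
    (hi₄ : i₄ ≤ 1) (hi₅ : i₅ ≤ 1) (hi₆ : i₆ ≤ 1) (hi₇ : i₇ ≤ 1)
    (hc₀ : c₀ ≤ 1) (hc₁ : c₁ ≤ 1) (hc₂ : c₂ ≤ 1) (hc₃ : c₃ ≤ 1)
    (hc₄ : c₄ ≤ 1) (hc₅ : c₅ ≤ 1) (hc₆ : c₆ ≤ 1) (hc₇ : c₇ ≤ 1)
    (hc₈ : c₈ ≤ 1) (hc₉ : c₉ ≤ 1) (hc₁₀ : c₁₀ ≤ 1) (hc₁₁ : c₁₁ ≤ 1)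
    (hc₁₂ : c₁₂ ≤ 1) (hc₁₃ : c₁₃ ≤ 1) (hc₁₄ : c₁₄ ≤ 1) (hc₁₅ : c₁₅ ≤ 1)
    (hd : i₀ + i₁ + i₂ + i₃ + i₄ + i₅ + i₆ + i₇ ≤ 3)
    (hd₀ : i₀ * (1 + i₆ + i₇ + c₁₅ + c₀ + c₁ + i₁ + i₂) ≤ 3)
    (hd₁ : i₁ * (1 + i₀ + c₀ + c₁ + c₂ + c₃ + c₄ + i₂) ≤ 3)
    (hd₂ : i₂ * (1 + i₀ + i₁ + c₃ + c₄ + c₅ + i₃ + i₄) ≤ 3)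
    (hd₃ : i₃ * (1 + i₂ + c₄ + c₅ + c₆ + c₇ + c₈ + i₄) ≤ 3)
    (hd₄ : i₄ * (1 + i₂ + i₃ + c₇ + c₈ + c₉ + i₅ + i₆) ≤ 3)
    (hd₅ : i₅ * (1 + i₄ + c₈ + c₉ + c₁₀ + c₁₁ + c₁₂ + i₆) ≤ 3)
    (hd₆ : i₆ * (1 + i₄ + i₅ + c₁₁ + c₁₂ + c₁₃ + i₇ + i₀) ≤ 3)
    (hd₇ : i₇ * (1 + i₆ + c₁₂ + c₁₃ + c₁₄ + c₁₅ + c₀ + i₀) ≤ 3) :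
    required i₀ i₁ i₂ i₃ i₄ i₅ i₆ i₇ c₀ c₁ c₃ c₄ c₅ c₇ c₈ c₉ c₁₁ c₁₂ c₁₃ c₁₅ ≤
      (1 - i₀) * orthGift i₆ i₇ c₁₅ c₀ c₁ i₁ i₂ + (1 - i₁) * diagGift i₀ c₀ c₁ c₂ c₃ c₄ i₂ +
      (1 - i₂) * orthGift i₀ i₁ c₃ c₄ c₅ i₃ i₄ + (1 - i₃) * diagGift i₂ c₄ c₅ c₆ c₇ c₈ i₄ +
      (1 - i₄) * orthGift i₂ i₃ c₇ c₈ c₉ i₅ i₆ + (1 - i₅) * diagGift i₄ c₈ c₉ c₁₀ c₁₁ c₁₂ i₆ +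
      (1 - i₆) * orthGift i₄ i₅ c₁₁ c₁₂ c₁₃ i₇ i₀ +
      (1 - i₇) * diagGift i₆ c₁₂ c₁₃ c₁₄ c₁₅ c₀ i₀ := by
  have hb := required_le_requiredBound i₀ i₁ i₂ i₃ i₄ i₅ i₆ i₇
    c₀ c₁ c₃ c₄ c₅ c₇ c₈ c₉ c₁₁ c₁₂ c₁₃ c₁₅
  have m₁ := Nat.mul_le_mul_left (1 - i₁) (diagMin_le_diagGift hi₀ hc₀ hc₁ hc₂ hc₃ hc₄ hi₂)
  have m₂ := Nat.mul_le_mul_left (1 - i₂) (orthMin_le_orthGift hi₀ hi₁ hc₃ hc₄ hc₅ hi₃ hi₄)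
  have m₃ := Nat.mul_le_mul_left (1 - i₃) (diagMin_le_diagGift hi₂ hc₄ hc₅ hc₆ hc₇ hc₈ hi₄)
  have m₄ := Nat.mul_le_mul_left (1 - i₄) (orthMin_le_orthGift hi₂ hi₃ hc₇ hc₈ hc₉ hi₅ hi₆)
  have m₅ := Nat.mul_le_mul_left (1 - i₅) (diagMin_le_diagGift hi₄ hc₈ hc₉ hc₁₀ hc₁₁ hc₁₂ hi₆)
  have m₆ := Nat.mul_le_mul_left (1 - i₆) (orthMin_le_orthGift hi₄ hi₅ hc₁₁ hc₁₂ hc₁₃ hi₇ hi₀)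
  have m₇ := Nat.mul_le_mul_left (1 - i₇) (diagMin_le_diagGift hi₆ hc₁₂ hc₁₃ hc₁₄ hc₁₅ hc₀ hi₀)
  rcases (Bool.or_eq_true _ _).mp (search_eq_true hi₀ hi₁ hi₂ hi₃ hi₄ hi₅ hi₆ hi₇) with h | h
  · have := Nat.le_of_ble_eq_true h
    omega
  rcases stage_spec (both_apply (both_apply (both_apply h hc₁₅) hc₀) hc₁) hd₀ with h | h
  · omega
  rcases stage_spec (both_apply (both_apply (both_apply h hc₂) hc₃) hc₄) hd₁ with h | h
  · omega
  rcases stage_spec (both_apply h hc₅) hd₂ with h | h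
  · omega
  rcases stage_spec (both_apply (both_apply (both_apply h hc₆) hc₇) hc₈) hd₃ with h | h
  · omega
  rcases stage_spec (both_apply h hc₉) hd₄ with h | h
  · omega
  rcases stage_spec (both_apply (both_apply (both_apply h hc₁₀) hc₁₁) hc₁₂) hd₅ with h | h
  · omega
  rcases stage_spec (both_apply h hc₁₃) hd₆ with h | h
  · omega
  rcases stage_spec (both_apply h hc₁₄) hd₇ with h | h
  · omega
  · exact (Nat.le_of_ble_eq_true h).trans (by omega)

/-- The sum of `F` over a fundamental domain of the translations by `(p, 0)` and `(0, q)`. -/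
def torusSum (p q : ℕ) (F : ℤ → ℤ → ℕ) : ℕ :=
  ∑ i ∈ Finset.range p, ∑ j ∈ Finset.range q, F i j

theorem sum_range_add_one_of_periodic {p : ℕ} {f : ℤ → ℕ} (hf : ∀ x, f (x + p) = f x) :
    ∑ i ∈ Finset.range p, f (i + 1) = ∑ i ∈ Finset.range p, f i := by
  have h₁ := Finset.sum_range_succ (fun i : ℕ => f i) p
  have h₂ := Finset.sum_range_succ' (fun i : ℕ => f i) p
  have h₃ := hf 0
  simp only [zero_add] at h₃
  push_cast at h₁ h₂
  omega

theorem sum_range_add_of_periodic {p : ℕ} {f : ℤ → ℕ} (hf : ∀ x, f (x + p) = f x) (v : ℤ) :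
    ∑ i ∈ Finset.range p, f (i + v) = ∑ i ∈ Finset.range p, f i := by
  have hs : ∀ v : ℤ, ∑ i ∈ Finset.range p, f (i + (v + 1)) = ∑ i ∈ Finset.range p, f (i + v) := by
    intro v
    rw [← sum_range_add_one_of_periodic (f := fun x => f (x + v))
      (fun x => by rw [add_right_comm, hf])]
    exact Finset.sum_congr rfl fun i _ => by ring_nf
  induction v with
  | zero => simp
  | succ n ih => rw [hs, ih]
  | pred n ih => rw [← ih, ← hs (-n - 1), sub_add_cancel]

theorem sum_range_mul_of_periodic {p : ℕ} {f : ℤ → ℕ} (hf : ∀ x, f (x + p) = f x) (m : ℕ) :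
    ∑ i ∈ Finset.range (m * p), f i = m * ∑ i ∈ Finset.range p, f i := by
  induction m with
  | zero => simp
  | succ n ih =>
    rw [Nat.succ_mul, Finset.sum_range_add, ih, Nat.succ_mul,
      ← sum_range_add_of_periodic hf ((n * p : ℕ) : ℤ)]
    congr 1
    exact Finset.sum_congr rfl fun i _ => by rw [Nat.cast_add, add_comm]

/-- `F` is invariant under the translations by `(p, 0)` and `(0, q)`. -/
def IsPeriodic (p q : ℕ) (F : ℤ → ℤ → ℕ) : Prop :=
  (∀ x y, F (x + p) y = F x y) ∧ ∀ x y, F x (y + q) = F x y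

theorem IsPeriodic.translate {p q : ℕ} {F : ℤ → ℤ → ℕ} (hF : IsPeriodic p q F) (a b : ℤ) :
    IsPeriodic p q fun x y => F (x + a) (y + b) :=
  ⟨fun x y => by simp only [add_right_comm x, hF.1],
    fun x y => by simp only [add_right_comm y, hF.2]⟩

theorem IsPeriodic.torusSum_translate {p q : ℕ} {F : ℤ → ℤ → ℕ} (hF : IsPeriodic p q F)
    (a b : ℤ) : torusSum p q (fun x y => F (x + a) (y + b)) = torusSum p q F := by
  calc torusSum p q (fun x y => F (x + a) (y + b))
      = ∑ i ∈ Finset.range p, ∑ j ∈ Finset.range q, F (i + a) j :=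
        Finset.sum_congr rfl fun i _ => sum_range_add_of_periodic (hF.2 _) b
    _ = torusSum p q F :=
        sum_range_add_of_periodic (f := fun x => ∑ j ∈ Finset.range q, F x j)
          (fun x => Finset.sum_congr rfl fun j _ => hF.1 x j) a

theorem torusSum_add (p q : ℕ) (F G : ℤ → ℤ → ℕ) :
    torusSum p q (fun x y => F x y + G x y) = torusSum p q F + torusSum p q G := by
  simp only [torusSum, Finset.sum_add_distrib]

theorem torusSum_le_torusSum {p q : ℕ} {F G : ℤ → ℤ → ℕ} (h : ∀ x y, F x y ≤ G x y) :
    torusSum p q F ≤ torusSum p q G :=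
  Finset.sum_le_sum fun _ _ => Finset.sum_le_sum fun _ _ => h _ _

theorem eq_at_zero_of_torusSum_le {p q : ℕ} (hp : 0 < p) (hq : 0 < q) {F G : ℤ → ℤ → ℕ}
    (h : ∀ x y, F x y ≤ G x y) (hs : torusSum p q G ≤ torusSum p q F) : F 0 0 = G 0 0 := by
  have h₁ := (Finset.sum_eq_sum_iff_of_le fun (i : ℕ) _ =>
    Finset.sum_le_sum fun (j : ℕ) (_ : j ∈ Finset.range q) => h i j).mp
      ((torusSum_le_torusSum h).antisymm hs) 0 (Finset.mem_range.mpr hp)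
  exact (Finset.sum_eq_sum_iff_of_le fun (j : ℕ) _ => h _ j).mp h₁ 0 (Finset.mem_range.mpr hq)

/-- The sum over a square around the origin whose side is a multiple of both periods. -/
theorem IsPeriodic.sum_square {p q : ℕ} {F : ℤ → ℤ → ℕ} (hF : IsPeriodic p q F) (k : ℕ) :
    torusSum (2 * (k * p * q)) (2 * (k * p * q))
        (fun x y => F (x + -(k * p * q : ℕ)) (y + -(k * p * q : ℕ))) =
      2 * k * q * (2 * k * p * torusSum p q F) := by
  have h := hF.translate (-(k * p * q : ℕ)) (-(k * p * q : ℕ))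
  rw [← hF.torusSum_translate (-(k * p * q : ℕ)) (-(k * p * q : ℕ))]
  set G : ℤ → ℤ → ℕ := fun x y => F (x + -(k * p * q : ℕ)) (y + -(k * p * q : ℕ))
  calc torusSum (2 * (k * p * q)) (2 * (k * p * q)) G
      = ∑ i ∈ Finset.range (2 * k * q * p), 2 * k * p * ∑ j ∈ Finset.range q, G i j := by
        rw [torusSum, show 2 * (k * p * q) = 2 * k * q * p by ring]
        refine Finset.sum_congr rfl fun i _ => ?_
        rw [← sum_range_mul_of_periodic (h.2 _), show 2 * k * q * p = 2 * k * p * q by ring]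
    _ = 2 * k * q * (2 * k * p * torusSum p q G) := by
        rw [← Finset.mul_sum, mul_left_comm, torusSum, ← sum_range_mul_of_periodic
          (f := fun x => ∑ j ∈ Finset.range q, G x j)
          (fun x => Finset.sum_congr rfl fun j _ => h.1 x j)]

open Classical in
/-- The state of a cell: `1` if it is live and `0` if it is dead. -/
noncomputable def cellState (S : Set (ℤ × ℤ)) (x y : ℤ) : ℕ := if (x, y) ∈ S then 1 else 0

theorem cellState_le_one (S : Set (ℤ × ℤ)) (x y : ℤ) : cellState S x y ≤ 1 := by
  unfold cellState
  split <;> simp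

theorem cellState_eq_one_iff {S : Set (ℤ × ℤ)} {x y : ℤ} : cellState S x y = 1 ↔ (x, y) ∈ S := by
  simp [cellState]

theorem cellState_eq_zero_iff {S : Set (ℤ × ℤ)} {x y : ℤ} : cellState S x y = 0 ↔ (x, y) ∉ S := by
  simp [cellState]

theorem ncard_inter_box_le (S : Set (ℤ × ℤ)) (r : ℕ) : (S ∩ box r).ncard ≤
    torusSum (2 * r) (2 * r) (fun x y => cellState S (x + -(r : ℕ)) (y + -(r : ℕ))) := by
  classical
  have hsub : S ∩ box r ⊆ ((((Finset.range (2 * r)) ×ˢ (Finset.range (2 * r))).filter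
      fun z : ℕ × ℕ => ((z.1 : ℤ) + -(r : ℕ), (z.2 : ℤ) + -(r : ℕ)) ∈ S).image
      fun z : ℕ × ℕ => ((z.1 : ℤ) + -(r : ℕ), (z.2 : ℤ) + -(r : ℕ)) : Finset (ℤ × ℤ)) := by
    rintro ⟨a, b⟩ ⟨hS, ha, hb⟩
    simp only [abs_lt] at ha hb
    have ha' : (((a + r).toNat : ℕ) : ℤ) + -(r : ℕ) = a := by omega
    have hb' : (((b + r).toNat : ℕ) : ℤ) + -(r : ℕ) = b := by omega
    simp only [Finset.coe_image, Set.mem_image, Finset.mem_coe, Finset.mem_filter,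
      Finset.mem_product, Finset.mem_range]
    refine ⟨((a + r).toNat, (b + r).toNat), ⟨⟨by omega, by omega⟩, ?_⟩, ?_⟩
    · rw [ha', hb']; exact hS
    · rw [ha', hb']
  refine (Set.ncard_le_ncard hsub (Finset.finite_toSet _)).trans ?_
  rw [Set.ncard_coe_finset]
  refine Finset.card_image_le.trans (le_of_eq ?_)
  rw [Finset.card_filter, Finset.sum_product]
  rfl

/-- In a periodic set of density one half at least half of the cells are live. -/
theorem mul_le_two_mul_torusSum_of_hasDensity {S : Set (ℤ × ℤ)} {p q : ℕ} (hp : 0 < p) (hq : 0 < q)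
    (hS : IsPeriodic p q (cellState S)) (hd : HasDensity S (1 / 2)) :
    p * q ≤ 2 * torusSum p q (cellState S) := by
  set c := torusSum p q (cellState S) with hc
  have hp' : (0 : ℝ) < p := Nat.cast_pos.mpr hp
  have hq' : (0 : ℝ) < q := Nat.cast_pos.mpr hq
  have hr : Tendsto (fun k : ℕ => k * p * q) atTop atTop := by
    simp only [mul_assoc]
    exact tendsto_id.atTop_mul_const' (Nat.mul_pos hp hq)
  have h₁ := hd.comp hr
  have h₂ : Tendsto (fun k : ℕ => ((2 * (k * p * q) : ℕ) : ℝ) / ((2 * (k * p * q) : ℕ) + (-1)))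
      atTop (𝓝 1) :=
    (tendsto_natCast_div_add_atTop (-1 : ℝ)).comp (tendsto_id.const_mul_atTop' two_pos |>.comp hr)
  have h₃ := ((h₂.pow 2).const_mul ((c : ℝ) / (p * q)))
  have h := le_of_tendsto_of_tendsto' h₁ h₃ fun k => by
    have hb := ncard_inter_box_le S (k * p * q)
    rw [hS.sum_square k] at hb
    have hb' : ((S ∩ box (k * p * q)).ncard : ℝ) ≤ 2 * k * q * (2 * k * p * c) := by
      exact_mod_cast hb
    have he : (c : ℝ) / (p * q) * (((2 * (k * p * q) : ℕ) : ℝ) / ((2 * (k * p * q) : ℕ) + (-1))) ^ 2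
        = 2 * k * q * (2 * k * p * c) / (2 * ((k * p * q : ℕ) : ℝ) - 1) ^ 2 := by
      rw [div_pow, ← sub_eq_add_neg]
      push_cast
      field_simp
    rw [he]
    exact div_le_div_of_nonneg_right hb' (sq_nonneg _)
  rw [one_pow, mul_one, div_le_div_iff₀ two_pos (by positivity)] at h
  have : (p : ℝ) * q ≤ 2 * c := by linarith
  exact_mod_cast this

theorem isPeriodic_cellState {S : Set (ℤ × ℤ)} {p q : ℕ}
    (hp : ∀ x : ℤ × ℤ, x ∈ S ↔ (x.1 + p, x.2) ∈ S)
    (hq : ∀ x : ℤ × ℤ, x ∈ S ↔ (x.1, x.2 + q) ∈ S) : IsPeriodic p q (cellState S) :=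
  ⟨fun x y => by classical exact if_congr (hp (x, y)).symm rfl rfl,
    fun x y => by classical exact if_congr (hq (x, y)).symm rfl rfl⟩

/-- The configuration `s` seen from the cell `(x, y)`. -/
def shift (s : ℤ → ℤ → ℕ) (x y : ℤ) : ℤ → ℤ → ℕ := fun a b => s (x + a) (y + b)

theorem shift_shift (s : ℤ → ℤ → ℕ) (x y a b : ℤ) :
    shift (shift s x y) a b = shift s (x + a) (y + b) := by
  funext c d
  simp only [shift, add_assoc]

theorem shift_apply_zero (s : ℤ → ℤ → ℕ) (x y : ℤ) : shift s x y 0 0 = s x y := by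
  simp only [shift, add_zero]

theorem IsPeriodic.shift {p q : ℕ} {s : ℤ → ℤ → ℕ} (hs : IsPeriodic p q s)
    (Φ : (ℤ → ℤ → ℕ) → ℕ) : IsPeriodic p q fun x y => Φ (shift s x y) := by
  constructor <;> intro x y <;> refine congrArg Φ (funext₂ fun a b => ?_)
  · simp only [_root_.shift, add_right_comm x, hs.1]
  · simp only [_root_.shift, add_right_comm y, hs.2]

theorem IsPeriodic.shift_self {p q : ℕ} {s : ℤ → ℤ → ℕ} (hs : IsPeriodic p q s) (a b : ℤ) :
    IsPeriodic p q (_root_.shift s a b) := by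
  simpa only [add_comm _ a, add_comm _ b] using! hs.translate a b

theorem IsPeriodic.torusSum_shift_self {p q : ℕ} {s : ℤ → ℤ → ℕ} (hs : IsPeriodic p q s)
    (a b : ℤ) : torusSum p q (_root_.shift s a b) = torusSum p q s := by
  simpa only [add_comm _ a, add_comm _ b] using! hs.torusSum_translate a b

theorem IsPeriodic.torusSum_shift {p q : ℕ} {s : ℤ → ℤ → ℕ} (hs : IsPeriodic p q s)
    (Φ : (ℤ → ℤ → ℕ) → ℕ) (a b : ℤ) :
    torusSum p q (fun x y => Φ (_root_.shift (_root_.shift s x y) a b)) =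
      torusSum p q (fun x y => Φ (_root_.shift s x y)) := by
  simp only [shift_shift]
  exact (hs.shift Φ).torusSum_translate a b

/-- The number of live neighbors of the cell at the origin. -/
def liveNbrs (w : ℤ → ℤ → ℕ) : ℕ :=
  w 1 0 + w 1 1 + w 0 1 + w (-1) 1 + w (-1) 0 + w (-1) (-1) + w 0 (-1) + w 1 (-1)

theorem nbrCount_eq_liveNbrs (S : Set (ℤ × ℤ)) (x y : ℤ) :
    nbrCount S (x, y) = liveNbrs (shift (cellState S) x y) := by
  classical
  have h : {z ∈ S | IsNbr (x, y) z} = ((({(x + 1, y), (x + 1, y + 1), (x, y + 1), (x - 1, y + 1),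
      (x - 1, y), (x - 1, y - 1), (x, y - 1), (x + 1, y - 1)} : Finset (ℤ × ℤ)).filter (· ∈ S) :
        Finset (ℤ × ℤ)) : Set (ℤ × ℤ)) := by
    ext ⟨a, b⟩
    simp only [IsNbr, Set.mem_ofPred_eq, Finset.coe_filter, Finset.mem_insert, Finset.mem_singleton,
      Prod.mk.injEq, ne_eq, abs_le, and_comm (a := (a, b) ∈ S)]
    refine and_congr_left fun _ => ?_
    omega
  rw [nbrCount, h, Set.ncard_coe_finset, Finset.card_filter]
  repeat rw [Finset.sum_insert (by simp; try omega)]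
  simp only [Finset.sum_singleton, liveNbrs, shift, cellState, add_zero, ← sub_eq_add_neg]
  ring

/-- The gift of the cell at the origin to its east neighbor. -/
def giftE (w : ℤ → ℤ → ℕ) : ℕ :=
  (1 - w 0 0) * (w 1 0 * orthGift (w 1 1) (w 0 1) (w (-1) 1) (w (-1) 0)
    (w (-1) (-1)) (w 0 (-1)) (w 1 (-1)))

/-- The gift of the cell at the origin to its northeast neighbor. -/
def giftNE (w : ℤ → ℤ → ℕ) : ℕ :=
  (1 - w 0 0) * (w 1 1 * diagGift (w 0 1) (w (-1) 1) (w (-1) 0) (w (-1) (-1))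
    (w 0 (-1)) (w 1 (-1)) (w 1 0))

/-- The gift of the cell at the origin to its north neighbor. -/
def giftN (w : ℤ → ℤ → ℕ) : ℕ :=
  (1 - w 0 0) * (w 0 1 * orthGift (w (-1) 1) (w (-1) 0) (w (-1) (-1)) (w 0 (-1))
    (w 1 (-1)) (w 1 0) (w 1 1))

/-- The gift of the cell at the origin to its northwest neighbor. -/
def giftNW (w : ℤ → ℤ → ℕ) : ℕ :=
  (1 - w 0 0) * (w (-1) 1 * diagGift (w (-1) 0) (w (-1) (-1)) (w 0 (-1)) (w 1 (-1))
    (w 1 0) (w 1 1) (w 0 1))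

/-- The gift of the cell at the origin to its west neighbor. -/
def giftW (w : ℤ → ℤ → ℕ) : ℕ :=
  (1 - w 0 0) * (w (-1) 0 * orthGift (w (-1) (-1)) (w 0 (-1)) (w 1 (-1)) (w 1 0)
    (w 1 1) (w 0 1) (w (-1) 1))

/-- The gift of the cell at the origin to its southwest neighbor. -/
def giftSW (w : ℤ → ℤ → ℕ) : ℕ :=
  (1 - w 0 0) * (w (-1) (-1) * diagGift (w 0 (-1)) (w 1 (-1)) (w 1 0) (w 1 1)
    (w 0 1) (w (-1) 1) (w (-1) 0))

/-- The gift of the cell at the origin to its south neighbor. -/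
def giftS (w : ℤ → ℤ → ℕ) : ℕ :=
  (1 - w 0 0) * (w 0 (-1) * orthGift (w 1 (-1)) (w 1 0) (w 1 1) (w 0 1)
    (w (-1) 1) (w (-1) 0) (w (-1) (-1)))

/-- The gift of the cell at the origin to its southeast neighbor. -/
def giftSE (w : ℤ → ℤ → ℕ) : ℕ :=
  (1 - w 0 0) * (w 1 (-1) * diagGift (w 1 0) (w 1 1) (w 0 1) (w (-1) 1)
    (w (-1) 0) (w (-1) (-1)) (w 0 (-1)))

/-- The total given by the cell at the origin. -/
def given (w : ℤ → ℤ → ℕ) : ℕ :=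
  giftE w + giftNE w + giftN w + giftNW w + giftW w + giftSW w + giftS w + giftSE w

/-- The total received by the cell at the origin. -/
def received (w : ℤ → ℤ → ℕ) : ℕ :=
  giftW (shift w 1 0) + giftSW (shift w 1 1) +
  giftS (shift w 0 1) + giftSE (shift w (-1) 1) +
  giftE (shift w (-1) 0) + giftNE (shift w (-1) (-1)) +
  giftN (shift w 0 (-1)) + giftNW (shift w 1 (-1))

theorem torusSum_received {p q : ℕ} {s : ℤ → ℤ → ℕ} (hs : IsPeriodic p q s) :
    torusSum p q (fun x y => received (shift s x y)) =
      torusSum p q (fun x y => given (shift s x y)) := by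
  simp only [received, given, torusSum_add, hs.torusSum_shift]
  ring

/-- A configuration of cells in which no live cell has more than three live neighbors. -/
structure MaxDegThree (w : ℤ → ℤ → ℕ) : Prop where
  le_one : ∀ a b, w a b ≤ 1
  liveNbrs_le : ∀ a b, w a b = 1 → liveNbrs (shift w a b) ≤ 3

theorem MaxDegThree.shift {w : ℤ → ℤ → ℕ} (hw : MaxDegThree w) (x y : ℤ) :
    MaxDegThree (shift w x y) :=
  ⟨fun _ _ => hw.le_one _ _, fun a b h => by rw [shift_shift]; exact hw.liveNbrs_le _ _ h⟩

theorem MaxDegThree.mul_liveNbrs_le {w : ℤ → ℤ → ℕ} (hw : MaxDegThree w) (a b : ℤ) :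
    w a b * liveNbrs (_root_.shift w a b) ≤ 3 := by
  rcases Nat.le_one_iff_eq_zero_or_eq_one.mp (hw.le_one a b) with h | h
  · simp [h]
  · rw [h, one_mul]
    exact hw.liveNbrs_le a b h

theorem given_eq (w : ℤ → ℤ → ℕ) :
    given w = (1 - w 0 0) * ringGift (w 1 0) (w 1 1) (w 0 1) (w (-1) 1)
    (w (-1) 0) (w (-1) (-1)) (w 0 (-1)) (w 1 (-1)) := by
  simp only [given, ringGift, giftE, giftNE, giftN, giftNW, giftW, giftSW, giftS, giftSE, mul_add]

theorem MaxDegThree.given_le {w : ℤ → ℤ → ℕ} (hw : MaxDegThree w) : given w ≤ 8 * (1 - w 0 0) := by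
  rw [given_eq, mul_comm]
  exact Nat.mul_le_mul_right _ (ringGift_le (hw.le_one _ _) (hw.le_one _ _) (hw.le_one _ _)
    (hw.le_one _ _) (hw.le_one _ _) (hw.le_one _ _) (hw.le_one _ _) (hw.le_one _ _)).1

/-- The total required by the cell at the origin if it is live. -/
def requiredAt (w : ℤ → ℤ → ℕ) : ℕ :=
  required (w 1 0) (w 1 1) (w 0 1) (w (-1) 1) (w (-1) 0) (w (-1) (-1)) (w 0 (-1))
    (w 1 (-1)) (w 2 0) (w 2 1) (w 1 2) (w 0 2) (w (-1) 2) (w (-2) 1) (w (-2) 0)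
    (w (-2) (-1)) (w (-1) (-2)) (w 0 (-2)) (w 1 (-2)) (w 2 (-1))

theorem eight_le_cond_nine_eight (b : Bool) : 8 ≤ cond b 9 8 := by
  cases b <;> simp

theorem eight_le_requiredAt (w : ℤ → ℤ → ℕ) : 8 ≤ requiredAt w :=
  eight_le_cond_nine_eight _

theorem MaxDegThree.requiredAt_le_received {w : ℤ → ℤ → ℕ} (hw : MaxDegThree w) (h₀ : w 0 0 = 1) :
    requiredAt w ≤ received w := by
  have h1 := hw.le_one
  have hd := hw.liveNbrs_le 0 0 h₀
  have hd₀ := hw.mul_liveNbrs_le 1 0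
  have hd₁ := hw.mul_liveNbrs_le 1 1
  have hd₂ := hw.mul_liveNbrs_le 0 1
  have hd₃ := hw.mul_liveNbrs_le (-1) 1
  have hd₄ := hw.mul_liveNbrs_le (-1) 0
  have hd₅ := hw.mul_liveNbrs_le (-1) (-1)
  have hd₆ := hw.mul_liveNbrs_le 0 (-1)
  have hd₇ := hw.mul_liveNbrs_le 1 (-1)
  simp only [liveNbrs, _root_.shift, Int.reduceAdd, Int.reduceNeg, h₀]
    at hd hd₀ hd₁ hd₂ hd₃ hd₄ hd₅ hd₆ hd₇
  have h := required_le_received (i₀ := w 1 0) (i₁ := w 1 1) (i₂ := w 0 1) (i₃ := w (-1) 1)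
    (i₄ := w (-1) 0) (i₅ := w (-1) (-1)) (i₆ := w 0 (-1)) (i₇ := w 1 (-1))
    (c₀ := w 2 0) (c₁ := w 2 1) (c₂ := w 2 2) (c₃ := w 1 2)
    (c₄ := w 0 2) (c₅ := w (-1) 2) (c₆ := w (-2) 2) (c₇ := w (-2) 1)
    (c₈ := w (-2) 0) (c₉ := w (-2) (-1)) (c₁₀ := w (-2) (-2)) (c₁₁ := w (-1) (-2))
    (c₁₂ := w 0 (-2)) (c₁₃ := w 1 (-2)) (c₁₄ := w 2 (-2)) (c₁₅ := w 2 (-1))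
    (h1 _ _) (h1 _ _) (h1 _ _) (h1 _ _) (h1 _ _) (h1 _ _) (h1 _ _) (h1 _ _)
    (h1 _ _) (h1 _ _) (h1 _ _) (h1 _ _) (h1 _ _) (h1 _ _) (h1 _ _) (h1 _ _)
    (h1 _ _) (h1 _ _) (h1 _ _) (h1 _ _) (h1 _ _) (h1 _ _) (h1 _ _) (h1 _ _)
    (by linarith) (by linarith) (by linarith) (by linarith) (by linarith) (by linarith)
    (by linarith) (by linarith) (by linarith)
  simp only [received, giftE, giftNE, giftN, giftNW, giftW, giftSW, giftS, giftSE, _root_.shift,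
    Int.reduceAdd, Int.reduceNeg, h₀, one_mul]
  exact h

theorem MaxDegThree.eight_mul_le_received {w : ℤ → ℤ → ℕ} (hw : MaxDegThree w) :
    8 * w 0 0 ≤ received w := by
  rcases Nat.le_one_iff_eq_zero_or_eq_one.mp (hw.le_one 0 0) with h | h
  · simp [h]
  · rw [h]
    exact (eight_le_requiredAt w).trans (hw.requiredAt_le_received h)

/-- If at least half of the cells are live, then all inequalities are equalities. -/
theorem MaxDegThree.given_and_received_eq {p q : ℕ} (hp : 0 < p) (hq : 0 < q) {s : ℤ → ℤ → ℕ}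
    (hs : MaxDegThree s) (hper : IsPeriodic p q s) (hhalf : p * q ≤ 2 * torusSum p q s) :
    given s = 8 * (1 - s 0 0) ∧ received s = 8 * s 0 0 := by
  have hg : ∀ x y, given (_root_.shift s x y) ≤ 8 * (1 - s x y) := fun x y => by
    simpa only [shift_apply_zero] using (hs.shift x y).given_le
  have hr : ∀ x y, 8 * s x y ≤ received (_root_.shift s x y) := fun x y => by
    simpa only [shift_apply_zero] using (hs.shift x y).eight_mul_le_received
  have hgs := torusSum_le_torusSum (p := p) (q := q) hg
  have hrs := torusSum_le_torusSum (p := p) (q := q) hr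
  have hrg := torusSum_received hper
  have htot : torusSum p q (fun x y => 8 * (1 - s x y)) + torusSum p q (fun x y => 8 * s x y) =
      8 * (p * q) := by
    rw [← torusSum_add]
    calc torusSum p q (fun x y => 8 * (1 - s x y) + 8 * s x y) = torusSum p q (fun _ _ => 8) := by
          congr 1
          funext x y
          have := hs.le_one x y
          omega
      _ = 8 * (p * q) := by simp [torusSum]; ring
  have hlive : torusSum p q (fun x y => 8 * s x y) = 8 * torusSum p q s := by
    simp only [torusSum, Finset.mul_sum]
  have hself : _root_.shift s 0 0 = s := by
    funext a b
    simp only [_root_.shift, zero_add]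
  have h₁ := eq_at_zero_of_torusSum_le hp hq hg (by omega)
  have h₂ := eq_at_zero_of_torusSum_le hp hq hr (by omega)
  rw [hself] at h₁ h₂
  exact ⟨h₁, h₂.symm⟩

theorem eq_false_of_cond_le {b : Bool} (h : cond b 9 8 ≤ 8) : b = false := by
  cases b <;> simp_all

theorem two_le_liveNbrs_of_requiredAt_le {w : ℤ → ℤ → ℕ} (h : requiredAt w ≤ 8) :
    2 ≤ liveNbrs w := by
  have h := eq_false_of_cond_le h
  rw [Bool.or_eq_false_iff] at h
  by_contra hlt
  have := Nat.ble_eq_true_of_le (show liveNbrs w ≤ 1 by omega)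
  exact absurd (this.symm.trans h.1) (by decide)

/-- If no live cell receives more than eight, a dead cell giving eight has at least four live
neighbors: otherwise two of its three live neighbors make contradictory demands on a cell adjacent
to both. -/
theorem MaxDegThree.four_le_liveNbrs {w : ℤ → ℤ → ℕ} (hw : MaxDegThree w)
    (hreq : ∀ a b, w a b = 1 → requiredAt (_root_.shift w a b) ≤ 8) (h₀ : w 0 0 = 0)
    (hg : given w = 8) : 4 ≤ liveNbrs w := by
  have h1 := hw.le_one
  rw [given_eq, h₀, Nat.sub_zero, one_mul] at hg
  have hring := (ringGift_le (h1 1 0) (h1 1 1) (h1 0 1) (h1 (-1) 1) (h1 (-1) 0) (h1 (-1) (-1))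
    (h1 0 (-1)) (h1 1 (-1))).2
  rw [hg, patternCode] at hring
  have n₀ := h1 1 0
  have n₁ := h1 1 1
  have n₂ := h1 0 1
  have n₃ := h1 (-1) 1
  have n₄ := h1 (-1) 0
  have n₅ := h1 (-1) (-1)
  have n₆ := h1 0 (-1)
  have n₇ := h1 1 (-1)
  have key : ∀ a b, w a b = 1 → _ := fun a b h => eq_false_of_cond_le (hreq a b h)
  simp only [Bool.or_eq_false_iff, _root_.shift] at key
  rcases hring with hring | hring | hring | hring | hring | hring
  · exact hring
  · omega
  · obtain ⟨v₀, v₁, v₂, v₃, v₄, v₅, v₆, v₇⟩ :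
        w 1 0 = 1 ∧ w 1 1 = 0 ∧ w 0 1 = 1 ∧ w (-1) 1 = 0 ∧
        w (-1) 0 = 0 ∧ w (-1) (-1) = 1 ∧ w 0 (-1) = 0 ∧ w 1 (-1) = 0 := by
      omega
    obtain ⟨-, -, -, -, -, ha, -, -, -⟩ := key 1 0 (by assumption)
    obtain ⟨-, -, -, -, -, -, -, -, hb⟩ := key 0 1 (by assumption)
    simp only [Int.reduceAdd, Int.reduceNeg, h₀, v₀, v₁, v₂, v₃, v₄, v₅, v₆, v₇,
      Nat.reduceAdd] at ha hb
    have ha := eq_one_and_eq_zero_of_obliged_eq_false (h1 _ _) (h1 _ _) ha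
    have hb := eq_one_and_eq_zero_of_obliged_eq_false (h1 _ _) (h1 _ _) hb
    omega
  · obtain ⟨v₀, v₁, v₂, v₃, v₄, v₅, v₆, v₇⟩ :
        w 1 0 = 1 ∧ w 1 1 = 0 ∧ w 0 1 = 0 ∧ w (-1) 1 = 1 ∧
        w (-1) 0 = 0 ∧ w (-1) (-1) = 0 ∧ w 0 (-1) = 1 ∧ w 1 (-1) = 0 := by
      omega
    obtain ⟨-, -, -, ha, -, -, -, -, -⟩ := key 0 (-1) (by assumption)
    obtain ⟨-, -, -, -, -, -, hb, -, -⟩ := key 1 0 (by assumption)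
    simp only [Int.reduceAdd, Int.reduceNeg, h₀, v₀, v₁, v₂, v₃, v₄, v₅, v₆, v₇,
      Nat.reduceAdd] at ha hb
    have ha := eq_one_and_eq_zero_of_obliged_eq_false (h1 _ _) (h1 _ _) ha
    have hb := eq_one_and_eq_zero_of_obliged_eq_false (h1 _ _) (h1 _ _) hb
    omega
  · obtain ⟨v₀, v₁, v₂, v₃, v₄, v₅, v₆, v₇⟩ :
        w 1 0 = 0 ∧ w 1 1 = 1 ∧ w 0 1 = 0 ∧ w (-1) 1 = 0 ∧
        w (-1) 0 = 1 ∧ w (-1) (-1) = 0 ∧ w 0 (-1) = 1 ∧ w 1 (-1) = 0 := by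
      omega
    obtain ⟨-, ha, -, -, -, -, -, -, -⟩ := key (-1) 0 (by assumption)
    obtain ⟨-, -, -, -, hb, -, -, -, -⟩ := key 0 (-1) (by assumption)
    simp only [Int.reduceAdd, Int.reduceNeg, h₀, v₀, v₁, v₂, v₃, v₄, v₅, v₆, v₇,
      Nat.reduceAdd] at ha hb
    have ha := eq_one_and_eq_zero_of_obliged_eq_false (h1 _ _) (h1 _ _) ha
    have hb := eq_one_and_eq_zero_of_obliged_eq_false (h1 _ _) (h1 _ _) hb
    omega
  · obtain ⟨v₀, v₁, v₂, v₃, v₄, v₅, v₆, v₇⟩ :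
        w 1 0 = 0 ∧ w 1 1 = 0 ∧ w 0 1 = 1 ∧ w (-1) 1 = 0 ∧
        w (-1) 0 = 1 ∧ w (-1) (-1) = 0 ∧ w 0 (-1) = 0 ∧ w 1 (-1) = 1 := by
      omega
    obtain ⟨-, -, -, -, -, -, -, ha, -⟩ := key 0 1 (by assumption)
    obtain ⟨-, -, hb, -, -, -, -, -, -⟩ := key (-1) 0 (by assumption)
    simp only [Int.reduceAdd, Int.reduceNeg, h₀, v₀, v₁, v₂, v₃, v₄, v₅, v₆, v₇,
      Nat.reduceAdd] at ha hb
    have ha := eq_one_and_eq_zero_of_obliged_eq_false (h1 _ _) (h1 _ _) ha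
    have hb := eq_one_and_eq_zero_of_obliged_eq_false (h1 _ _) (h1 _ _) hb
    omega

theorem periodic_halfDensity_maxDegThree_isStillLife (S : Set (ℤ × ℤ))
    (hper : Periodic S) (hdeg : ∀ x ∈ S, nbrCount S x ≤ 3)
    (hdens : HasDensity S (1 / 2)) :
    (∀ x ∈ S, 2 ≤ nbrCount S x) ∧ (∀ y ∉ S, 4 ≤ nbrCount S y) ∧ StillLife S := by
  obtain ⟨p, q, hp, hq, hSp, hSq⟩ := hper
  lift p to ℕ using hp.le
  lift q to ℕ using hq.le
  rw [Nat.cast_pos] at hp hq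
  have hs := isPeriodic_cellState hSp hSq
  have hhalf := mul_le_two_mul_torusSum_of_hasDensity hp hq hs hdens
  have hw : MaxDegThree (cellState S) := ⟨cellState_le_one S, fun a b h => by
    rw [← nbrCount_eq_liveNbrs]
    exact hdeg _ (cellState_eq_one_iff.mp h)⟩
  have htight : ∀ x y, given (shift (cellState S) x y) = 8 * (1 - cellState S x y) ∧
      received (shift (cellState S) x y) = 8 * cellState S x y := fun x y => by
    have h := (hw.shift x y).given_and_received_eq hp hq (hs.shift_self x y)
      (hhalf.trans_eq (congrArg _ (hs.torusSum_shift_self x y).symm))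
    rwa [shift_apply_zero] at h
  have hreq : ∀ x y, cellState S x y = 1 → requiredAt (shift (cellState S) x y) ≤ 8 := by
    intro x y h
    refine ((hw.shift x y).requiredAt_le_received ((shift_apply_zero _ x y).trans h)).trans ?_
    rw [(htight x y).2, h]
  have hlive : ∀ x ∈ S, 2 ≤ nbrCount S x := by
    rintro ⟨x, y⟩ h
    rw [nbrCount_eq_liveNbrs]
    exact two_le_liveNbrs_of_requiredAt_le (hreq x y (cellState_eq_one_iff.mpr h))
  have hdead : ∀ y ∉ S, 4 ≤ nbrCount S y := by
    rintro ⟨x, y⟩ h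
    have h₀ := cellState_eq_zero_iff.mpr h
    rw [nbrCount_eq_liveNbrs]
    refine (hw.shift x y).four_le_liveNbrs (fun a b hab => ?_)
      ((shift_apply_zero _ x y).trans h₀) (by rw [(htight x y).1, h₀])
    rw [shift_shift]
    exact hreq _ _ hab
  refine ⟨hlive, hdead, fun y hy => ?_, hlive, hdeg⟩
  have := hdead y hy
  omega
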